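/- If S ⊆ X is uncountable, then the subgroup G_S is not a free abelian group. -/

import Mathlib

/-!
Let `b` be a basis of a free abelian group and `N` a countable subgroup. Only countably many basis
elements occur in the expansions of elements of `N`; let `C ⊇ N` be the countable subgroup they
span. If `x` is divisible modulo `N` by infinitely many integers, then each coordinate of `x`
outside `C` has infinitely many divisors and is zero, so `x ∈ C`. Hence there are only countably
many such `x`.

In `G_S` the element `x_{η,1}` is divisible modulo `Z_ω` by every `p ∈ P_η` with `1 ≤ p`, because up
to finitely many places it is a multiple of `p x_{η,p+1}`. The elements `x_{η,1}` are pairwise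
distinct because `x_{η,1}` has the same support as `f_η`, so an uncountable `S` excludes a basis.
-/

open scoped Classical

/-- `xv P f η j` is the element `x_{η,j}` of `ℤ^ω`:
`x_{η,j}(i) = (∏ {p ∈ P_η : j ≤ p < i}) * f_η(i)` (empty product `= 1`). -/
noncomputable def xv {X : Type*} (P : X → Set ℕ) (f : X → ℕ → ℤ) (η : X) (j : ℕ) :
    ℕ → ℤ :=
  fun i => (∏ p ∈ (Finset.range i).filter (fun p => p ∈ P η ∧ j ≤ p), (p : ℤ)) * f η i

/-- `Z_ω`: the subgroup of finitely supported functions in `ℤ^ω`. -/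
def Zomega : AddSubgroup (ℕ → ℤ) where
  carrier := {g | (Function.support g).Finite}
  zero_mem' := by simp
  add_mem' := fun ha hb => (ha.union hb).subset (Function.support_add _ _)
  neg_mem' := fun ha => by simpa using ha

/-- `G_S`: the subgroup of `ℤ^ω` generated by `Z_ω ∪ {x_{η,j} : η ∈ S, j ∈ ℕ}`. -/
noncomputable def GS {X : Type*} (P : X → Set ℕ) (f : X → ℕ → ℤ) (S : Set X) :
    AddSubgroup (ℕ → ℤ) :=
  AddSubgroup.closure ((Zomega : Set (ℕ → ℤ)) ∪ {g | ∃ η ∈ S, ∃ j : ℕ, g = xv P f η j})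

section DivisorsModulo

open Submodule

/-- The set of scalars `r` by which `x` is divisible modulo the submodule `N`, that is, for which
`x ∈ N + r M`. -/
def divisorsMod {R M : Type*} [Ring R] [AddCommGroup M] [Module R M] (N : Submodule R M) (x : M) :
    Set R :=
  {r | ∃ y, x - r • y ∈ N}

theorem divisorsMod_mono {R M : Type*} [Ring R] [AddCommGroup M] [Module R M]
    {N N' : Submodule R M} (h : N ≤ N') (x : M) : divisorsMod N x ⊆ divisorsMod N' x :=
  fun _ ⟨y, hy⟩ => ⟨y, h hy⟩

theorem exists_countable_subset_span_image {ι R M : Type*} [Semiring R] [AddCommMonoid M]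
    [Module R M] (b : Module.Basis ι R M) {s : Set M} (hs : s.Countable) :
    ∃ I : Set ι, I.Countable ∧ s ⊆ span R (b '' I) :=
  ⟨⋃ x ∈ s, (b.repr x).support, hs.biUnion fun _ _ => Finset.countable_toSet _,
    fun _ hx => b.mem_span_image.2
      (Set.subset_biUnion_of_mem (u := fun x => ((b.repr x).support : Set ι)) hx)⟩

theorem countable_span {R M : Type*} [Semiring R] [Countable R] [AddCommMonoid M] [Module R M]
    {s : Set M} (hs : s.Countable) : (span R s : Set M).Countable := by
  have : Countable s := hs
  have hspan : Countable (span R (Set.range ((↑) : s → M))) := inferInstance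
  rwa [Subtype.range_coe] at hspan

theorem dvd_repr_of_mem_divisorsMod {ι R M : Type*} [Ring R] [AddCommGroup M] [Module R M]
    (b : Module.Basis ι R M) {I : Set ι} {x : M} {r : R}
    (hr : r ∈ divisorsMod (span R (b '' I)) x) {i : ι} (hi : i ∉ I) : r ∣ b.repr x i := by
  obtain ⟨y, hy⟩ := hr
  have hcoord : b.repr (x - r • y) i = 0 :=
    Finsupp.notMem_support_iff.1 fun h => hi (b.mem_span_image.1 hy h)
  rw [map_sub, map_smul, Finsupp.sub_apply, Finsupp.smul_apply, smul_eq_mul, sub_eq_zero] at hcoord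
  exact ⟨_, hcoord⟩

theorem finite_setOf_dvd {R : Type*} [CommMonoidWithZero R] [UniqueFactorizationMonoid R]
    [Finite Rˣ] {a : R} (ha : a ≠ 0) : {r : R | r ∣ a}.Finite := by
  have := Fintype.ofFinite Rˣ
  have := UniqueFactorizationMonoid.fintypeSubtypeDvd a ha
  exact Set.finite_coe_iff.1 (Finite.of_fintype {r : R // r ∣ a})

variable {R M : Type*} [CommRing R] [UniqueFactorizationMonoid R] [Finite Rˣ]
  [AddCommGroup M] [Module R M]

theorem mem_span_image_of_infinite_divisorsMod {ι : Type*} (b : Module.Basis ι R M) {I : Set ι}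
    {x : M} (hx : (divisorsMod (span R (b '' I)) x).Infinite) : x ∈ span R (b '' I) := by
  refine b.mem_span_image.2 fun i hi => ?_
  by_contra hiI
  exact hx ((finite_setOf_dvd (Finsupp.mem_support_iff.1 hi)).subset
    fun _ hr => dvd_repr_of_mem_divisorsMod b hr hiI)

theorem countable_setOf_infinite_divisorsMod [Countable R] [Module.Free R M] {N : Submodule R M}
    (hN : (N : Set M).Countable) : {x : M | (divisorsMod N x).Infinite}.Countable := by
  let b := Module.Free.chooseBasis R M
  obtain ⟨I, hI, hNI⟩ := exists_countable_subset_span_image b hN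
  exact (countable_span (hI.image b)).mono fun x hx =>
    mem_span_image_of_infinite_divisorsMod b (hx.mono (divisorsMod_mono hNI x))

end DivisorsModulo

theorem countable_setOf_finite_support {α M : Type*} [Zero M] [Countable α] [Countable M] :
    {g : α → M | (Function.support g).Finite}.Countable :=
  (Set.countable_range fun v : α →₀ M => (v : α → M)).mono
    fun g hg => Set.mem_range.2 ⟨Finsupp.ofSupportFinite g hg, rfl⟩

theorem injective_support_of_independent {X α M : Type*} [Zero M] [Nontrivial M] {f : X → α → M}
    (hind : ∀ (k : ℕ) (ηs : Fin k → X) (a : Fin k → M), Function.Injective ηs →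
      {i : α | ∀ l, f (ηs l) i = a l}.Nonempty) :
    Function.Injective fun η => Function.support (f η) := by
  intro η ν heq
  by_contra hne
  obtain ⟨m, hm⟩ := exists_ne (0 : M)
  obtain ⟨i, hi⟩ := hind 2 ![η, ν] ![m, 0] (by
    simpa [Function.Injective, Fin.forall_fin_two, eq_comm] using hne)
  have hη : f η i = m := hi 0
  have hν : f ν i = 0 := hi 1
  have hiff : f η i ≠ 0 ↔ f ν i ≠ 0 := Set.ext_iff.1 heq i
  exact hiff.1 (hη.trans_ne hm) hν

section Generators

variable {X : Type*} (P : X → Set ℕ) (f : X → ℕ → ℤ)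

theorem support_xv {j : ℕ} (hj : 0 < j) (η : X) :
    Function.support (xv P f η j) = Function.support (f η) := by
  ext i
  have hprod : ∏ p ∈ (Finset.range i).filter (fun p => p ∈ P η ∧ j ≤ p), (p : ℤ) ≠ 0 :=
    Finset.prod_ne_zero_iff.2 fun p hp =>
      Nat.cast_ne_zero.2 (hj.trans_le (Finset.mem_filter.1 hp).2.2).ne'
  simp only [Function.mem_support, xv, mul_ne_zero_iff, hprod, ne_eq, not_false_eq_true, true_and]

theorem xv_apply_eq_prod_mul {j k i : ℕ} (hjk : j ≤ k) (hki : k ≤ i) (η : X) :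
    xv P f η j i = (∏ p ∈ (Finset.Ico j k).filter (· ∈ P η), (p : ℤ)) * xv P f η k i := by
  have hxv (m : ℕ) : xv P f η m i =
      (∏ p ∈ Finset.Ico m i, if p ∈ P η then (p : ℤ) else 1) * f η i := by
    rw [xv, ← Finset.prod_filter]
    congr 2
    ext p
    simp only [Finset.mem_filter, Finset.mem_range, Finset.mem_Ico]
    tauto
  rw [hxv, hxv, Finset.prod_filter, ← mul_assoc, Finset.prod_Ico_consecutive _ hjk hki]

theorem xv_sub_smul_mem_Zomega {j k : ℕ} (hjk : j ≤ k) (η : X) :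
    xv P f η j - (∏ p ∈ (Finset.Ico j k).filter (· ∈ P η), (p : ℤ)) • xv P f η k ∈ Zomega := by
  refine (Set.finite_Iio k).subset fun i hi => ?_
  by_contra hki
  exact hi (sub_eq_zero.2 (xv_apply_eq_prod_mul P f hjk (not_lt.1 hki) η))

/-- `Z_ω` as a `ℤ`-submodule of `G_S`, the modulus for divisibility of the generators of `G_S`. -/
noncomputable def zomegaInGS (S : Set X) : Submodule ℤ (GS P f S) :=
  AddSubgroup.toIntSubmodule (Zomega.addSubgroupOf (GS P f S))

theorem countable_zomegaInGS (S : Set X) : (zomegaInGS P f S : Set (GS P f S)).Countable :=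
  countable_setOf_finite_support.preimage Subtype.val_injective

variable {S : Set X} {η : X}

theorem xv_mem_GS (hη : η ∈ S) (j : ℕ) : xv P f η j ∈ GS P f S :=
  AddSubgroup.subset_closure (Or.inr ⟨η, hη, j, rfl⟩)

theorem mem_zomegaInGS {g : GS P f S} : g ∈ zomegaInGS P f S ↔ (g : ℕ → ℤ) ∈ Zomega :=
  AddSubgroup.mem_addSubgroupOf

theorem mem_divisorsMod_xv (hη : η ∈ S) {j p : ℕ} (hp : p ∈ P η) (hjp : j ≤ p) :
    (p : ℤ) ∈ divisorsMod (zomegaInGS P f S) ⟨xv P f η j, xv_mem_GS P f hη j⟩ := by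
  have hdvd : (p : ℤ) ∣ ∏ q ∈ (Finset.Ico j (p + 1)).filter (· ∈ P η), (q : ℤ) :=
    Finset.dvd_prod_of_mem (fun q : ℕ => (q : ℤ)) (by simp [hp, hjp])
  obtain ⟨c, hc⟩ := hdvd
  have hmem := xv_sub_smul_mem_Zomega P f (Nat.le_succ_of_le hjp) η
  rw [hc, mul_smul] at hmem
  let y : GS P f S := c • ⟨xv P f η (p + 1), xv_mem_GS P f hη (p + 1)⟩
  have hy : (⟨xv P f η j, xv_mem_GS P f hη j⟩ - (p : ℤ) • y : GS P f S) ∈ zomegaInGS P f S :=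
    (mem_zomegaInGS P f).2 hmem
  exact ⟨y, hy⟩

theorem infinite_divisorsMod_xv (hη : η ∈ S) (hinf : (P η).Infinite) (j : ℕ) :
    (divisorsMod (zomegaInGS P f S) ⟨xv P f η j, xv_mem_GS P f hη j⟩).Infinite := by
  have htail : (P η \ Set.Iio j).Infinite := hinf.sdiff (Set.finite_Iio j)
  refine (htail.image Nat.cast_injective.injOn).mono ?_
  rintro _ ⟨p, ⟨hp, hjp⟩, rfl⟩
  exact mem_divisorsMod_xv P f hη hp (not_lt.1 hjp)

end Generators

theorem stmt10_general {X : Type*} (P : X → Set ℕ) (f : X → ℕ → ℤ) (S : Set X)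
    (hinf : ∀ η ∈ S, (P η).Infinite)
    (hsupp : S.InjOn fun η => Function.support (f η)) (hS : ¬ S.Countable) :
    ¬ Module.Free ℤ (GS P f S) := by
  intro hfree
  -- The product in `x_{η,0}` vanishes from `i = 1` on if `0 ∈ P_η`; that in `x_{η,1}` never does.
  let x (η : S) : GS P f S := ⟨xv P f η 1, xv_mem_GS P f η.2 1⟩
  have hx : Function.Injective x := by
    intro η ν hην
    have hxv : xv P f η 1 = xv P f ν 1 := congrArg Subtype.val hην
    refine Subtype.ext (hsupp η.2 ν.2 ?_)
    simpa only [support_xv P f one_pos] using congrArg Function.support hxv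
  have hdiv (η : S) : (divisorsMod (zomegaInGS P f S) (x η)).Infinite :=
    infinite_divisorsMod_xv P f η.2 (hinf η η.2) 1
  have hrange : (Set.range x).Countable :=
    (countable_setOf_infinite_divisorsMod (countable_zomegaInGS P f S)).mono
      (Set.range_subset_iff.2 hdiv)
  have : Countable (Set.range x) := hrange
  exact hS (Set.rangeFactorization_injective.2 hx).countable

/-- if `S ⊆ X` is uncountable, then `G_S` is not a free abelian group. -/
theorem stmt10
    {X : Type*} (P : X → Set ℕ) (f : X → ℕ → ℤ)
    (hprime : ∀ η, ∀ p ∈ P η, p.Prime)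
    (hinf : ∀ η, (P η).Infinite)
    (hdisj : ∀ η ν, η ≠ ν → (P η ∩ P ν).Finite)
    (hind : ∀ (k : ℕ) (ηs : Fin k → X) (a : Fin k → ℤ), Function.Injective ηs →
      {i : ℕ | ∀ l, f (ηs l) i = a l}.Infinite)
    (S : Set X) (hS : ¬ S.Countable) :
    ¬ Module.Free ℤ (GS P f S) :=
  stmt10_general P f S (fun η _ => hinf η)
    (injective_support_of_independent fun k ηs a hηs => (hind k ηs a hηs).nonempty).injOn hS
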